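/- The function Q(x) = (3 / cosh(2x)^2)^(1/4) satisfies the ordinary differential equation Q''(x) + Q(x)^5 = Q(x) for every x ∈ ℝ. -/

import Mathlib

/-!
Write `f x = 3 / cosh (2x) ^ 2`, so that `Q = f ^ (1/4)` with `f > 0`. The logarithmic derivative
of `f` is `-4 tanh (2x)`, hence `Q' = -tanh (2x) Q`. Differentiating once more,
`Q'' = (tanh² (2x) - 2 sech² (2x)) Q = (1 - 3 sech² (2x)) Q = Q - f Q`, and `f = Q ^ 4`.
-/

open Real

/-- The soliton profile `Q(x) = (3 / cosh(2x)^2)^(1/4)`. -/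
noncomputable def Q (x : ℝ) : ℝ := (3 / Real.cosh (2 * x) ^ 2) ^ ((1 : ℝ) / 4)

theorem Q_pow_four (x : ℝ) : Q x ^ 4 = 3 / Real.cosh (2 * x) ^ 2 := by
  have hf : 0 ≤ 3 / Real.cosh (2 * x) ^ 2 := by positivity
  rw [Q, ← Real.rpow_natCast, ← Real.rpow_mul hf]
  norm_num

theorem hasDerivAt_cosh_two_mul (x : ℝ) :
    HasDerivAt (fun y : ℝ => Real.cosh (2 * y)) (2 * Real.sinh (2 * x)) x := by
  simpa [mul_comm] using ((hasDerivAt_id x).const_mul 2).cosh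

theorem hasDerivAt_sinh_two_mul (x : ℝ) :
    HasDerivAt (fun y : ℝ => Real.sinh (2 * y)) (2 * Real.cosh (2 * x)) x := by
  simpa [mul_comm] using ((hasDerivAt_id x).const_mul 2).sinh

theorem hasDerivAt_Q (x : ℝ) :
    HasDerivAt Q (-(Real.sinh (2 * x) / Real.cosh (2 * x)) * Q x) x := by
  have hc : Real.cosh (2 * x) ≠ 0 := (Real.cosh_pos _).ne'
  have hf : 3 / Real.cosh (2 * x) ^ 2 ≠ 0 := by positivity
  have h := (((hasDerivAt_const x (3 : ℝ)).fun_div ((hasDerivAt_cosh_two_mul x).fun_pow 2)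
    (pow_ne_zero 2 hc)).rpow_const (p := (1 : ℝ) / 4) (Or.inl hf))
  refine h.congr_deriv ?_
  rw [Real.rpow_sub_one hf, Q]
  field_simp
  ring

/-- `Q` satisfies the ODE `Q'' + Q^5 = Q` on all of `ℝ`. -/
theorem Q_satisfies_ode (x : ℝ) : deriv (deriv Q) x + Q x ^ 5 = Q x := by
  have hc : Real.cosh (2 * x) ≠ 0 := (Real.cosh_pos _).ne'
  have hQ' : deriv Q = fun y => -(Real.sinh (2 * y) / Real.cosh (2 * y)) * Q y :=
    funext fun y => (hasDerivAt_Q y).deriv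
  have h := (((hasDerivAt_sinh_two_mul x).fun_div (hasDerivAt_cosh_two_mul x) hc).fun_neg).fun_mul
    (hasDerivAt_Q x)
  rw [hQ', h.deriv, pow_succ (Q x), Q_pow_four]
  have hs := Real.sinh_sq (2 * x)
  field_simp
  rw [hs]
  ring
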